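/- For every integer n ≥ 1, the number of even derangements of [n] minus the number of odd derangements of [n] equals (-1)^{n-1}(n-1). -/

import Mathlib

open Finset MvPolynomial

/-- Number of inversions of a permutation of `Fin n`
(pairs `p.1 < p.2` with `π p.1 > π p.2`). -/
def inversions {n : ℕ} (π : Equiv.Perm (Fin n)) : ℕ :=
  (Finset.univ.filter fun p : Fin n × Fin n => p.1 < p.2 ∧ π p.2 < π p.1).card

/-- Excedance indices of a permutation. -/
def EXCi {n : ℕ} (π : Equiv.Perm (Fin n)) : Finset (Fin n) :=
  Finset.univ.filter fun i => i < π i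

/-- Excedance values of a permutation. -/
def EXCv {n : ℕ} (π : Equiv.Perm (Fin n)) : Finset (Fin n) :=
  (EXCi π).image π

/-- Right-to-left minima indices of a permutation. -/
def RLMi {n : ℕ} (π : Equiv.Perm (Fin n)) : Finset (Fin n) :=
  Finset.univ.filter fun i => ∀ j, i < j → π i < π j

/-- Right-to-left minima values of a permutation. -/
def RLMv {n : ℕ} (π : Equiv.Perm (Fin n)) : Finset (Fin n) :=
  (RLMi π).image π

/-- The derangements of `Fin n`, i.e. permutations with no fixed point. -/
def derangementsF (n : ℕ) : Finset (Equiv.Perm (Fin n)) :=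
  Finset.univ.filter fun π => ∀ i, π i ≠ i

open Equiv Matrix

/- Expand `det (J - 1)`, where `J` is the all-ones matrix: the zero diagonal kills every permutation
with a fixed point and each derangement contributes its sign, so the determinant is the signed count
of derangements. Since `J` has rank one, the same determinant is `(-1) ^ n * (1 - n)`. -/

section Determinant

variable {α R : Type*} [Fintype α] [DecidableEq α] [CommRing R]

theorem det_vecMulVec_sub_one (u v : α → R) :
    (vecMulVec u v - 1).det = (-1) ^ Fintype.card α * (1 - v ⬝ᵥ u) := by
  have rank_one_update :
      vecMulVec u v - 1 = -(1 + replicateCol Unit (-u) * replicateRow Unit v) := by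
    rw [← vecMulVec_eq, neg_vecMulVec, ← sub_eq_add_neg, neg_sub]
  rw [rank_one_update, det_neg, det_one_add_replicateCol_mul_replicateRow, dotProduct_neg,
    ← sub_eq_add_neg]

theorem det_eq_sum_derangements_of_diag_eq_zero {A : Matrix α α R} (hA : ∀ i, A i i = 0) :
    A.det = ∑ σ ∈ (derangements α).toFinset, (Perm.sign σ : R) * ∏ i, A (σ i) i := by
  rw [det_apply']
  refine (sum_subset (subset_univ _) fun σ _ hσ => ?_).symm
  obtain ⟨i, hi⟩ : ∃ i, σ i = i := by
    by_contra! no_fixed_point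
    exact hσ (Set.mem_toFinset.mpr no_fixed_point)
  have fixed_point_entry : A (σ i) i = 0 := by rw [hi, hA]
  have entry_prod_eq_zero : ∏ j, A (σ j) j = 0 := prod_eq_zero (mem_univ i) fixed_point_entry
  rw [entry_prod_eq_zero, mul_zero]

end Determinant

theorem sum_sign_derangements (α : Type*) [Fintype α] [DecidableEq α] :
    ∑ σ ∈ (derangements α).toFinset, (Perm.sign σ : ℤ)
      = (-1) ^ Fintype.card α * (1 - Fintype.card α) := by
  let A : Matrix α α ℤ := vecMulVec 1 1 - 1
  have diag_eq_zero (i : α) : A i i = 0 := by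
    simp [A]
  have off_diag_eq_one {i j : α} (hij : i ≠ j) : A i j = 1 := by
    simp [A, hij]
  calc ∑ σ ∈ (derangements α).toFinset, (Perm.sign σ : ℤ)
      = ∑ σ ∈ (derangements α).toFinset, (Perm.sign σ : ℤ) * ∏ i, A (σ i) i := by
        refine sum_congr rfl fun σ hσ => ?_
        rw [prod_eq_one fun i _ => off_diag_eq_one (Set.mem_toFinset.mp hσ i), mul_one]
    _ = A.det := (det_eq_sum_derangements_of_diag_eq_zero diag_eq_zero).symm
    _ = (-1) ^ Fintype.card α * (1 - Fintype.card α) := by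
        rw [det_vecMulVec_sub_one, one_dotProduct_one]

theorem derangementsF_eq_toFinset_derangements (n : ℕ) :
    derangementsF n = (derangements (Fin n)).toFinset := by
  ext π
  rw [Set.mem_toFinset]
  exact mem_filter_univ π

theorem sign_eq_neg_one_pow_inversions {n : ℕ} (π : Perm (Fin n)) :
    Perm.sign π = (-1) ^ inversions π := by
  calc Perm.sign π
      = ∏ i, ∏ j, if i < j ∧ π j < π i then -1 else 1 := by
        rw [Perm.sign_eq_prod_prod_Ioi]
        refine prod_congr rfl fun i _ => ?_
        rw [← filter_lt_eq_Ioi, prod_filter]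
        refine prod_congr rfl fun j _ => ?_
        rw [ite_and]
        refine ite_congr rfl (fun hij => ?_) fun _ => rfl
        have lt_iff_not_gt : π i < π j ↔ ¬ π j < π i := by
          rw [not_lt, (π.injective.ne hij.ne).le_iff_lt]
        simp only [lt_iff_not_gt, ite_not]
    _ = ∏ p : Fin n × Fin n, if p.1 < p.2 ∧ π p.2 < π p.1 then -1 else 1 :=
        (Fintype.prod_prod_type' _).symm
    _ = (-1) ^ inversions π := by
        rw [← prod_filter, prod_const, inversions]

theorem card_filter_even_sub_card_filter_not_even {ι R : Type*} [Ring R] (s : Finset ι)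
    (f : ι → ℕ) :
    (#{i ∈ s | Even (f i)} : R) - #{i ∈ s | ¬ Even (f i)} = ∑ i ∈ s, (-1) ^ f i := by
  simp only [neg_one_pow_eq_ite, sum_ite, sum_const, nsmul_eq_mul, mul_one, mul_neg,
    ← sub_eq_add_neg]

theorem stmt5 (n : ℕ) (hn : 1 ≤ n) :
    (((derangementsF n).filter fun π => Even (inversions π)).card : ℤ)
      - ((derangementsF n).filter fun π => ¬ Even (inversions π)).card
    = (-1) ^ (n - 1) * ((n : ℤ) - 1) := by
  calc (((derangementsF n).filter fun π => Even (inversions π)).card : ℤ)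
        - ((derangementsF n).filter fun π => ¬ Even (inversions π)).card
      = ∑ π ∈ derangementsF n, (-1) ^ inversions π :=
        card_filter_even_sub_card_filter_not_even _ _
    _ = ∑ π ∈ derangementsF n, (Perm.sign π : ℤ) := by
        simp only [sign_eq_neg_one_pow_inversions, Units.val_pow_eq_pow_val, Units.val_neg,
          Units.val_one]
    _ = (-1) ^ n * (1 - n) := by
        rw [derangementsF_eq_toFinset_derangements, sum_sign_derangements, Fintype.card_fin]
    _ = (-1) ^ (n - 1) * ((n : ℤ) - 1) := by
        rw [← mul_pow_sub_one (Nat.one_le_iff_ne_zero.mp hn)]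
        ring
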